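/- arXiv:2408.05511 — 2 statements merged into one kernel-verified Lean document; each statement's English description precedes it below -/
import Mathlib

section
/- Let k ≥ 1 and let μ, η ⊆ {1, …, 2k}; write μ' = {i+2 : i ∈ μ} ⊆ {3, …, 2k+2} and η' = {i+2 : i ∈ η}, and for a matrix M over ℤ[i] let [M] denote its entrywise reduction mod 2ℤ[i]. Consider the four-element sets of reduced matrices 𝒥_μ = {[ρ_{k+1}(e_{μ'})], [ρ_{k+1}(e_{{1}∪μ'})], [ρ_{k+1}(e_{{2}∪μ'})], [ρ_{k+1}(e_{{1,2}∪μ'})]} and 𝒥_η defined analogously from η'. Then 𝒥_μ = 𝒥_η if and only if Sh(ρₖ(e_μ)) = Sh(ρₖ(e_η)); moreover, if Sh(ρₖ(e_μ)) ≠ Sh(ρₖ(e_η)), then 𝒥_μ ∩ 𝒥_η = ∅. -/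
/-!
Appending one tensor factor on the right, `A, P ↦ A ⊗ P` with `P` of size `2 × 2`, is
multiplicative (`tens_mul`), and `ρ_{k+1}(e_{i+2}) = ρₖ(e_i) ⊗ B` (`rhoVec_shift`), while
`ρ_{k+1}(e_1) = 1 ⊗ E₁` and `ρ_{k+1}(e_2) = 1 ⊗ E₂`. Hence the four matrices defining `𝒥_μ` are
the reductions of `ρₖ(e_μ) ⊗ (C * B ^ |μ|)` for `C = 1, E₁, E₂, E₁ * E₂`.

Every matrix involved is monomial, and modulo 2 all its nonzero entries agree, being `1` or `ι`,
the class of `i` (`good_rho`). Since `ι * ι = 1`, the group `{1, ι}` times the two permutations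
of `Fin 2` absorbs both the common entry of `ρₖ(e_μ)` and the factor `B ^ |μ|`, so `𝒥_μ` consists
of the matrices `d • (Sh(ρₖ(e_μ)) ⊗ Q)` for `d = 1, ι` and `Q` one of the two permutation matrices
of size 2 (`mem_quadSet_iff`). Such a matrix determines its pattern of nonzero positions, hence
`Sh(ρₖ(e_μ))`, which gives the equivalence and the disjointness together.
-/

open Matrix

namespace DiracSpinor

/-- The Gaussian integer `i`. -/
def gi : GaussianInt := ⟨0, 1⟩

/-- `E₁ = [[i,0],[0,−i]]`. -/
def E1 : Matrix (Fin 2) (Fin 2) GaussianInt := !![gi, 0; 0, -gi]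

/-- `E₂ = [[0,i],[i,0]]`. -/
def E2 : Matrix (Fin 2) (Fin 2) GaussianInt := !![0, gi; gi, 0]

/-- `B = [[0,−i],[i,0]]`. -/
def Bm : Matrix (Fin 2) (Fin 2) GaussianInt := !![0, -gi; gi, 0]

/-- The 2×2 identity matrix. -/
def I2 : Matrix (Fin 2) (Fin 2) GaussianInt := 1

/-- Kronecker product of square matrices, with the standard identification of the
index set `Fin m × Fin n` with `Fin (m*n)`. -/
def kron {m n : ℕ} (A : Matrix (Fin m) (Fin m) GaussianInt)
    (B : Matrix (Fin n) (Fin n) GaussianInt) :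
    Matrix (Fin (m * n)) (Fin (m * n)) GaussianInt :=
  Matrix.reindex finProdFinEquiv finProdFinEquiv (Matrix.kroneckerMap (· * ·) A B)

/-- Iterated Kronecker power `A^{⊗t}`. -/
def kronPow (A : Matrix (Fin 2) (Fin 2) GaussianInt) :
    (t : ℕ) → Matrix (Fin (2 ^ t)) (Fin (2 ^ t)) GaussianInt
  | 0 => 1
  | t + 1 => Matrix.reindex (finCongr (pow_succ 2 t).symm) (finCongr (pow_succ 2 t).symm)
      (kron (kronPow A t) A)

theorem sizeEq (k : ℕ) (i : Fin (2 * k)) :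
    2 ^ (k - 1 - i.val / 2) * 2 * 2 ^ (i.val / 2) = 2 ^ k := by
  have h1 : i.val < 2 * k := i.isLt
  have h2 : (k - 1 - i.val / 2) + 1 + i.val / 2 = k := by omega
  calc 2 ^ (k - 1 - i.val / 2) * 2 * 2 ^ (i.val / 2)
      = 2 ^ ((k - 1 - i.val / 2) + 1 + i.val / 2) := by rw [pow_add, pow_add, pow_one]
    _ = 2 ^ k := by rw [h2]

/-- `rhoVec k i` is `ρₖ(e_{i+1})`, the matrix representing the `(i+1)`-st vector generator
(`i : Fin (2*k)` is 0-based, so `i = 2j-2` encodes `e_{2j-1}` and `i = 2j-1` encodes `e_{2j}`):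
`ρₖ(e_{2j−1}) = I₂^{⊗(k−j)} ⊗ E₁ ⊗ B^{⊗(j−1)}` and `ρₖ(e_{2j}) = I₂^{⊗(k−j)} ⊗ E₂ ⊗ B^{⊗(j−1)}`. -/
def rhoVec (k : ℕ) (i : Fin (2 * k)) : Matrix (Fin (2 ^ k)) (Fin (2 ^ k)) GaussianInt :=
  Matrix.reindex (finCongr (sizeEq k i)) (finCongr (sizeEq k i))
    (kron (kron (kronPow I2 (k - 1 - i.val / 2)) (if i.val % 2 = 0 then E1 else E2))
      (kronPow Bm (i.val / 2)))

/-- `rho k μ` is `ρₖ(e_μ)`: the product of the `ρₖ(e_i)` for `i ∈ μ` taken in increasing order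
(`μ : Finset (Fin (2*k))` is the 0-based version of a subset of `{1, …, 2k}`). -/
def rho (k : ℕ) (μ : Finset (Fin (2 * k))) : Matrix (Fin (2 ^ k)) (Fin (2 ^ k)) GaussianInt :=
  ((μ.sort (· ≤ ·)).map (rhoVec k)).prod

/-- The quotient ring `ℤ[i]/2ℤ[i]`. -/
abbrev Rbar : Type := GaussianInt ⧸ Ideal.span ({2} : Set GaussianInt)

/-- Reduction `ℤ[i] → ℤ[i]/2ℤ[i]`. -/
def red : GaussianInt →+* Rbar := Ideal.Quotient.mk _

/-- `rhoBar k μ` is the entrywise reduction of `ρₖ(e_μ)` mod `2ℤ[i]`. -/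
def rhoBar (k : ℕ) (μ : Finset (Fin (2 * k))) : Matrix (Fin (2 ^ k)) (Fin (2 ^ k)) Rbar :=
  (rho k μ).map red

/-- The shape of a matrix: the 0–1 matrix recording the positions of nonzero entries. -/
def Sh {n : ℕ} (M : Matrix (Fin n) (Fin n) GaussianInt) : Matrix (Fin n) (Fin n) GaussianInt :=
  Matrix.of fun r s => if M r s = 0 then 0 else 1

/-- A matrix has real type if all its nonzero entries lie in `{1, −1}`. -/
def RealType {n : ℕ} (M : Matrix (Fin n) (Fin n) GaussianInt) : Prop :=
  ∀ r s, M r s ≠ 0 → M r s = 1 ∨ M r s = -1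

/-- A matrix has imaginary type if all its nonzero entries lie in `{i, −i}`. -/
def ImagType {n : ℕ} (M : Matrix (Fin n) (Fin n) GaussianInt) : Prop :=
  ∀ r s, M r s ≠ 0 → M r s = gi ∨ M r s = -gi


/-- For `μ ⊆ {1, …, 2k}` (0-based), `shiftUp k μ` is `μ' = {i + 2 : i ∈ μ} ⊆ {3, …, 2k+2}`
(0-based). -/
def shiftUp (k : ℕ) (μ : Finset (Fin (2 * k))) : Finset (Fin (2 * (k + 1))) :=
  μ.image fun i => ⟨i.val + 2, by have := i.isLt; omega⟩

/-- The set `𝒥_μ` of the four mod-`2ℤ[i]` reduced matrices `[ρ_{k+1}(e_{μ'})]`,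
`[ρ_{k+1}(e_{{1}∪μ'})]`, `[ρ_{k+1}(e_{{2}∪μ'})]`, `[ρ_{k+1}(e_{{1,2}∪μ'})]`
(elements `1, 2` of `{1, …, 2k+2}` are, 0-based, `⟨0,_⟩` and `⟨1,_⟩`). -/
def quadSet (k : ℕ) (μ : Finset (Fin (2 * k))) :
    Set (Matrix (Fin (2 ^ (k + 1))) (Fin (2 ^ (k + 1))) Rbar) :=
  {rhoBar (k + 1) (shiftUp k μ),
   rhoBar (k + 1) (insert (⟨0, by omega⟩ : Fin (2 * (k + 1))) (shiftUp k μ)),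
   rhoBar (k + 1) (insert (⟨1, by omega⟩ : Fin (2 * (k + 1))) (shiftUp k μ)),
   rhoBar (k + 1) (insert (⟨0, by omega⟩ : Fin (2 * (k + 1)))
     (insert (⟨1, by omega⟩ : Fin (2 * (k + 1))) (shiftUp k μ)))}

/-! ### The units `1` and `ι` modulo 2 -/

/-- The class of `i` modulo 2. -/
def iota : Rbar := red gi

theorem iota_mul_iota : iota * iota = 1 := by
  rw [iota, ← map_mul, ← map_one red]
  refine Ideal.Quotient.eq.2 (Ideal.mem_span_singleton.2 ⟨-1, ?_⟩)
  decide

theorem red_neg (x : GaussianInt) : red (-x) = red x := by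
  refine Ideal.Quotient.eq.2 (Ideal.mem_span_singleton.2 ⟨-x, ?_⟩)
  ring

theorem one_ne_zero_Rbar : (1 : Rbar) ≠ 0 := by
  intro h
  rw [← map_one (Ideal.Quotient.mk _), Ideal.Quotient.eq_zero_iff_mem,
    Ideal.mem_span_singleton] at h
  obtain ⟨⟨a, b⟩, h⟩ := h
  have h1 := congrArg Zsqrtd.re h
  simp at h1
  omega

theorem iota_ne_zero : iota ≠ 0 := by
  intro h
  have h1 := iota_mul_iota
  rw [h, mul_zero] at h1
  exact one_ne_zero_Rbar h1.symm

/-! ### Monomial matrices with constant reduction -/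

/-- `Mono σ c M`: the matrix `M` vanishes off the graph of `σ`, and on that graph all its entries
reduce to `c` modulo 2. The map `σ` is not required to be a bijection. -/
def Mono {n : Type*} (σ : n → n) (c : Rbar) (M : Matrix n n GaussianInt) : Prop :=
  ∀ r s, (s = σ r → red (M r s) = c) ∧ (s ≠ σ r → M r s = 0)

theorem Mono.one {n : Type*} [DecidableEq n] : Mono (id : n → n) 1 1 := by
  intro r s
  refine ⟨fun h => ?_, fun h => ?_⟩
  · subst h; simp
  · exact Matrix.one_apply_ne (Ne.symm h)

theorem Mono.mul {n : Type*} [Fintype n] {σ τ : n → n} {c d : Rbar}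
    {M N : Matrix n n GaussianInt} (hM : Mono σ c M) (hN : Mono τ d N) :
    Mono (τ ∘ σ) (c * d) (M * N) := by
  intro r s
  have key : (M * N) r s = M r (σ r) * N (σ r) s := by
    rw [Matrix.mul_apply]
    refine Finset.sum_eq_single _ (fun t _ ht => ?_) (fun h => absurd (Finset.mem_univ _) h)
    rw [(hM r t).2 ht, zero_mul]
  rw [key]
  refine ⟨fun h => ?_, fun h => ?_⟩
  · rw [map_mul, (hM _ _).1 rfl, (hN _ _).1 h]
  · rw [(hN _ _).2 h, mul_zero]

theorem Mono.reindex {m n : Type*} (e : m ≃ n) {σ : m → m} {c : Rbar}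
    {M : Matrix m m GaussianInt} (hM : Mono σ c M) :
    Mono (fun r => e (σ (e.symm r))) c (Matrix.reindex e e M) := by
  intro r s
  have := hM (e.symm r) (e.symm s)
  rw [Equiv.symm_apply_eq, Ne, Equiv.symm_apply_eq] at this
  exact this

theorem Mono.kroneckerMap {m n : Type*} {σ : m → m} {τ : n → n} {c d : Rbar}
    {M : Matrix m m GaussianInt} {N : Matrix n n GaussianInt} (hM : Mono σ c M)
    (hN : Mono τ d N) :
    Mono (Prod.map σ τ) (c * d) (Matrix.kroneckerMap (· * ·) M N) := by
  rintro ⟨r, r'⟩ ⟨s, s'⟩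
  refine ⟨fun h => ?_, fun h => ?_⟩
  · obtain ⟨h1, h2⟩ := Prod.ext_iff.1 h
    rw [Matrix.kroneckerMap_apply, map_mul, (hM _ _).1 h1, (hN _ _).1 h2]
  · rw [Matrix.kroneckerMap_apply]
    by_cases h1 : s = σ r
    · have h2 : s' ≠ τ r' := fun h2 => h (Prod.ext h1 h2)
      rw [(hN _ _).2 h2, mul_zero]
    · rw [(hM _ _).2 h1, zero_mul]

/-- A matrix whose nonzero entries lie on the graph of a map and are, modulo 2, all equal to `1`
or all equal to `ι`. -/
def Good {n : Type*} (M : Matrix n n GaussianInt) : Prop :=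
  ∃ (σ : n → n) (c : Rbar), (c = 1 ∨ c = iota) ∧ Mono σ c M

theorem mul_mem_units {c d : Rbar} (hc : c = 1 ∨ c = iota) (hd : d = 1 ∨ d = iota) :
    c * d = 1 ∨ c * d = iota := by
  rcases hc with rfl | rfl <;> rcases hd with rfl | rfl <;> simp [iota_mul_iota]

theorem Good.one {n : Type*} [DecidableEq n] : Good (1 : Matrix n n GaussianInt) :=
  ⟨_, _, Or.inl rfl, Mono.one⟩

theorem Good.mul {n : Type*} [Fintype n] {M N : Matrix n n GaussianInt}
    (hM : Good M) (hN : Good N) : Good (M * N) := by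
  obtain ⟨σ, c, hc, hM⟩ := hM
  obtain ⟨τ, d, hd, hN⟩ := hN
  exact ⟨_, _, mul_mem_units hc hd, hM.mul hN⟩

theorem Good.reindex {m n : Type*} (e : m ≃ n) {M : Matrix m m GaussianInt} (hM : Good M) :
    Good (Matrix.reindex e e M) := by
  obtain ⟨σ, c, hc, hM⟩ := hM
  exact ⟨_, _, hc, hM.reindex e⟩

theorem Good.kron {m n : ℕ} {M : Matrix (Fin m) (Fin m) GaussianInt}
    {N : Matrix (Fin n) (Fin n) GaussianInt} (hM : Good M) (hN : Good N) : Good (kron M N) := by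
  obtain ⟨σ, c, hc, hM⟩ := hM
  obtain ⟨τ, d, hd, hN⟩ := hN
  exact ⟨_, _, mul_mem_units hc hd, (hM.kroneckerMap hN).reindex _⟩

theorem Good.kronPow {A : Matrix (Fin 2) (Fin 2) GaussianInt} (hA : Good A) (t : ℕ) :
    Good (kronPow A t) := by
  induction t with
  | zero => exact Good.one
  | succ t ih => exact (ih.kron hA).reindex _

theorem mono_E1 : Mono (fun r : Fin 2 => r + 0) iota E1 := by
  intro r s
  fin_cases r <;> fin_cases s <;> simp [E1, iota, red_neg]

theorem mono_E2 : Mono (fun r : Fin 2 => r + 1) iota E2 := by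
  intro r s
  fin_cases r <;> fin_cases s <;> simp [E2, iota]

theorem mono_Bm : Mono (fun r : Fin 2 => r + 1) iota Bm := by
  intro r s
  fin_cases r <;> fin_cases s <;> simp [Bm, iota, red_neg]

theorem good_rhoVec (k : ℕ) (i : Fin (2 * k)) : Good (rhoVec k i) := by
  have hE : Good (if i.val % 2 = 0 then E1 else E2) := by
    split_ifs
    · exact ⟨_, _, Or.inr rfl, mono_E1⟩
    · exact ⟨_, _, Or.inr rfl, mono_E2⟩
  exact (((Good.one.kronPow _).kron hE).kron
    (Good.kronPow ⟨_, _, Or.inr rfl, mono_Bm⟩ _)).reindex _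

theorem good_rho (k : ℕ) (μ : Finset (Fin (2 * k))) : Good (rho k μ) := by
  unfold rho
  induction μ.sort (· ≤ ·) with
  | nil => exact Good.one
  | cons a l ih =>
    rw [List.map_cons, List.prod_cons]
    exact (good_rhoVec k a).mul ih

/-! ### Shapes of monomial matrices -/

theorem Sh_apply_of_mono {n : ℕ} {σ : Fin n → Fin n} {c : Rbar}
    {M : Matrix (Fin n) (Fin n) GaussianInt} (hc : c ≠ 0) (hM : Mono σ c M) (r s : Fin n) :
    Sh M r s = if s = σ r then 1 else 0 := by
  by_cases h : s = σ r
  · have : M r s ≠ 0 := by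
      intro h0
      have h1 := (hM r s).1 h
      rw [h0, map_zero] at h1
      exact hc h1.symm
    simp [Sh, h, h ▸ this]
  · simp [Sh, h, (hM r s).2 h]

theorem Sh_eq_iff {n : ℕ} {σ τ : Fin n → Fin n} {c d : Rbar}
    {M N : Matrix (Fin n) (Fin n) GaussianInt} (hc : c ≠ 0) (hd : d ≠ 0)
    (hM : Mono σ c M) (hN : Mono τ d N) : Sh M = Sh N ↔ σ = τ := by
  constructor
  · intro h
    funext r
    have h1 := congrFun (congrFun h r) (σ r)
    rw [Sh_apply_of_mono hc hM, Sh_apply_of_mono hd hN, if_pos rfl] at h1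
    by_contra hne
    rw [if_neg hne] at h1
    exact one_ne_zero h1
  · rintro rfl
    ext1 r s
    rw [Sh_apply_of_mono hc hM, Sh_apply_of_mono hd hN]

/-! ### Splitting off the last tensor factor -/

/-- The identification of `Fin (2 ^ k) × Fin 2` with `Fin (2 ^ (k + 1))`, the second component
being the lowest binary digit. -/
def pairEquiv (k : ℕ) : Fin (2 ^ k) × Fin 2 ≃ Fin (2 ^ (k + 1)) :=
  finProdFinEquiv.trans (finCongr (pow_succ 2 k).symm)

/-- The Kronecker product `A ⊗ P` with a rightmost factor of size 2. -/
def tens (k : ℕ) (A : Matrix (Fin (2 ^ k)) (Fin (2 ^ k)) GaussianInt)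
    (P : Matrix (Fin 2) (Fin 2) GaussianInt) :
    Matrix (Fin (2 ^ (k + 1))) (Fin (2 ^ (k + 1))) GaussianInt :=
  Matrix.reindex (pairEquiv k) (pairEquiv k) (Matrix.kroneckerMap (· * ·) A P)

theorem tens_mul (k : ℕ) (A A' : Matrix (Fin (2 ^ k)) (Fin (2 ^ k)) GaussianInt)
    (P P' : Matrix (Fin 2) (Fin 2) GaussianInt) :
    tens k A P * tens k A' P' = tens k (A * A') (P * P') := by
  simp only [tens, Matrix.reindex_apply, Matrix.submatrix_mul_equiv]
  congr 1
  exact (Matrix.mul_kronecker_mul A A' P P').symm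

theorem tens_one_one (k : ℕ) : tens k 1 1 = 1 := by
  simp only [tens, Matrix.reindex_apply]
  rw [show Matrix.kroneckerMap (· * ·) (1 : Matrix (Fin (2 ^ k)) (Fin (2 ^ k)) GaussianInt)
    (1 : Matrix (Fin 2) (Fin 2) GaussianInt) = 1 from Matrix.one_kronecker_one,
    Matrix.submatrix_one_equiv]

/-- `I₂^{⊗a} ⊗ E ⊗ B^{⊗b}` with independent exponents, so that the exponents can be rewritten
in spite of the dependent matrix sizes. -/
def vecAux (K a b : ℕ) (h : 2 ^ a * 2 * 2 ^ b = 2 ^ K) (E : Matrix (Fin 2) (Fin 2) GaussianInt) :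
    Matrix (Fin (2 ^ K)) (Fin (2 ^ K)) GaussianInt :=
  Matrix.reindex (finCongr h) (finCongr h) (kron (kron (kronPow I2 a) E) (kronPow Bm b))

theorem vecAux_congr {K a b a' b' : ℕ} (h : 2 ^ a * 2 * 2 ^ b = 2 ^ K)
    (h' : 2 ^ a' * 2 * 2 ^ b' = 2 ^ K) (E : Matrix (Fin 2) (Fin 2) GaussianInt)
    (ha : a = a') (hb : b = b') : vecAux K a b h E = vecAux K a' b' h' E := by
  subst ha hb; rfl

/-- Associativity of the Kronecker product, in the form `I^{⊗a} ⊗ E ⊗ (B^{⊗b} ⊗ B) =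
(I^{⊗a} ⊗ E ⊗ B^{⊗b}) ⊗ B`. -/
theorem vecAux_succ (K a b : ℕ) (h : 2 ^ a * 2 * 2 ^ b = 2 ^ K)
    (h' : 2 ^ a * 2 * 2 ^ (b + 1) = 2 ^ (K + 1)) (E : Matrix (Fin 2) (Fin 2) GaussianInt) :
    vecAux (K + 1) a (b + 1) h' E = tens K (vecAux K a b h E) Bm := by
  have e1 : ∀ x : ℕ, x / 2 ^ (b + 1) = x / 2 / 2 ^ b := fun x => by
    rw [pow_succ', Nat.div_div_eq_div_mul]
  have e2 : ∀ x : ℕ, x % 2 ^ (b + 1) / 2 = x / 2 % 2 ^ b := fun x => by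
    rw [pow_succ, Nat.mod_mul_left_div_self]
  have e3 : ∀ x : ℕ, x % 2 ^ (b + 1) % 2 = x % 2 := fun x =>
    Nat.mod_mod_of_dvd _ (dvd_pow_self 2 (Nat.succ_ne_zero b))
  ext1 r s
  change kron (kronPow I2 a) E (Fin.divNat (finCongr h'.symm r)) (Fin.divNat (finCongr h'.symm s)) *
      (kronPow Bm b (Fin.divNat (finCongr (pow_succ 2 b) (Fin.modNat (finCongr h'.symm r))))
        (Fin.divNat (finCongr (pow_succ 2 b) (Fin.modNat (finCongr h'.symm s)))) *
      Bm (Fin.modNat (finCongr (pow_succ 2 b) (Fin.modNat (finCongr h'.symm r))))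
        (Fin.modNat (finCongr (pow_succ 2 b) (Fin.modNat (finCongr h'.symm s))))) =
    (kron (kronPow I2 a) E
        (Fin.divNat (finCongr h.symm (Fin.divNat (finCongr (pow_succ 2 K) r))))
        (Fin.divNat (finCongr h.symm (Fin.divNat (finCongr (pow_succ 2 K) s)))) *
      kronPow Bm b (Fin.modNat (finCongr h.symm (Fin.divNat (finCongr (pow_succ 2 K) r))))
        (Fin.modNat (finCongr h.symm (Fin.divNat (finCongr (pow_succ 2 K) s))))) *
      Bm (Fin.modNat (finCongr (pow_succ 2 K) r)) (Fin.modNat (finCongr (pow_succ 2 K) s))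
  rw [← mul_assoc]
  congr 1
  · congr 1
    · congr 1 <;> exact Fin.ext (e1 _)
    · congr 1 <;> exact Fin.ext (e2 _)
  · congr 1 <;> exact Fin.ext (e3 _)

theorem kronPow_I2 (t : ℕ) : kronPow I2 t = 1 := by
  induction t with
  | zero => rfl
  | succ t ih =>
    have h : kronPow I2 (t + 1) = tens t (kronPow I2 t) I2 := rfl
    rw [h, ih]
    exact tens_one_one t

theorem vecAux_zero (k : ℕ) (h : 2 ^ k * 2 * 2 ^ 0 = 2 ^ (k + 1))
    (E : Matrix (Fin 2) (Fin 2) GaussianInt) : vecAux (k + 1) k 0 h E = tens k 1 E := by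
  ext1 r s
  have hd : ∀ x : Fin (2 ^ (k + 1)),
      Fin.divNat (finCongr h.symm x) = finCongr (pow_succ 2 k) x := fun x =>
    Fin.ext (Nat.div_one _)
  change kron (kronPow I2 k) E (Fin.divNat (finCongr h.symm r)) (Fin.divNat (finCongr h.symm s)) *
      (1 : Matrix (Fin (2 ^ 0)) (Fin (2 ^ 0)) GaussianInt) (Fin.modNat (finCongr h.symm r))
        (Fin.modNat (finCongr h.symm s)) =
    kron 1 E (finCongr (pow_succ 2 k) r) (finCongr (pow_succ 2 k) s)
  have hs : Fin.modNat (finCongr h.symm r) = Fin.modNat (finCongr h.symm s) :=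
    Fin.ext ((Nat.mod_one _).trans (Nat.mod_one _).symm)
  rw [hd, hd, hs, Matrix.one_apply_eq, mul_one, kronPow_I2]

theorem rhoVec_eq (k : ℕ) (i : Fin (2 * k)) : rhoVec k i =
    vecAux k (k - 1 - i.val / 2) (i.val / 2) (sizeEq k i) (if i.val % 2 = 0 then E1 else E2) :=
  rfl

/-- The index map `i ↦ i + 2`, as an embedding. -/
def shiftEmb (k : ℕ) : Fin (2 * k) ↪ Fin (2 * (k + 1)) :=
  ⟨fun i => ⟨i.val + 2, by have := i.isLt; omega⟩, fun i j h => by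
    have := congrArg Fin.val h
    exact Fin.ext (Nat.add_right_cancel this)⟩

theorem rhoVec_shift (k : ℕ) (i : Fin (2 * k)) :
    rhoVec (k + 1) (shiftEmb k i) = tens k (rhoVec k i) Bm := by
  have hv : (shiftEmb k i).val = i.val + 2 := rfl
  have hi := i.isLt
  have hmod : (i.val + 2) % 2 = i.val % 2 := by omega
  have hsz : 2 ^ (k - 1 - i.val / 2) * 2 * 2 ^ (i.val / 2 + 1) = 2 ^ (k + 1) := by
    rw [pow_succ 2 (i.val / 2), ← mul_assoc, sizeEq, ← pow_succ]
  rw [rhoVec_eq, rhoVec_eq, ← vecAux_succ _ _ _ _ hsz]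
  simp only [hv, hmod]
  exact vecAux_congr _ _ _ (by omega) (by omega)

theorem rhoVec_zero (k : ℕ) (a : Fin (2 * (k + 1))) (ha : a.val = 0) :
    rhoVec (k + 1) a = tens k 1 E1 := by
  have hsz : 2 ^ k * 2 * 2 ^ 0 = 2 ^ (k + 1) := by rw [pow_zero, mul_one, pow_succ]
  rw [rhoVec_eq, if_pos (by omega), ← vecAux_zero k hsz]
  exact vecAux_congr _ _ _ (by omega) (by omega)

theorem rhoVec_one (k : ℕ) (a : Fin (2 * (k + 1))) (ha : a.val = 1) :
    rhoVec (k + 1) a = tens k 1 E2 := by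
  have hsz : 2 ^ k * 2 * 2 ^ 0 = 2 ^ (k + 1) := by rw [pow_zero, mul_one, pow_succ]
  rw [rhoVec_eq, if_neg (by omega), ← vecAux_zero k hsz]
  exact vecAux_congr _ _ _ (by omega) (by omega)

theorem rho_shiftUp (k : ℕ) (μ : Finset (Fin (2 * k))) :
    rho (k + 1) (shiftUp k μ) = tens k (rho k μ) (Bm ^ μ.card) := by
  have h1 : shiftUp k μ = μ.map (shiftEmb k) := (Finset.map_eq_image (shiftEmb k) μ).symm
  have h2 : (μ.map (shiftEmb k)).sort (· ≤ ·) = (μ.sort (· ≤ ·)).map (shiftEmb k) := by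
    refine (Finset.map_sort _ _ _ _ fun a _ b _ => ?_).symm
    change a.val ≤ b.val ↔ a.val + 2 ≤ b.val + 2
    omega
  rw [rho, rho, h1, h2, ← Finset.length_sort (· ≤ ·) (s := μ)]
  induction μ.sort (· ≤ ·) with
  | nil => exact (tens_one_one k).symm
  | cons a l ih =>
    simp only [List.map_cons, List.prod_cons, List.length_cons]
    rw [ih, rhoVec_shift, tens_mul, ← pow_succ' Bm]

theorem rho_insert (k : ℕ) (a : Fin (2 * k)) (s : Finset (Fin (2 * k))) (h : ∀ b ∈ s, a < b) :
    rho k (insert a s) = rhoVec k a * rho k s := by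
  rw [rho, Finset.sort_insert (· ≤ ·) (fun b hb => (h b hb).le) (fun ha => lt_irrefl a (h a ha)),
    List.map_cons, List.prod_cons, rho]

theorem two_le_of_mem_shiftUp {k : ℕ} {μ : Finset (Fin (2 * k))} {b : Fin (2 * (k + 1))}
    (hb : b ∈ shiftUp k μ) : 2 ≤ b.val := by
  obtain ⟨i, -, rfl⟩ := Finset.mem_image.1 hb
  exact Nat.le_add_left 2 _

/-! ### Description of the sets `𝒥_μ` -/

/-- The map on `Fin (2 ^ (k + 1))` acting by `σ` on the upper digits and by `x ↦ x + b` on the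
lowest binary digit. -/
def twist (k : ℕ) (σ : Fin (2 ^ k) → Fin (2 ^ k)) (b : Fin 2) :
    Fin (2 ^ (k + 1)) → Fin (2 ^ (k + 1)) :=
  fun r => pairEquiv k (Prod.map σ (· + b) ((pairEquiv k).symm r))

/-- The matrix with constant value `d` on the graph of `f`, and `0` elsewhere. -/
def graphMat {n : ℕ} (f : Fin n → Fin n) (d : Rbar) : Matrix (Fin n) (Fin n) Rbar :=
  Matrix.of fun r s => if s = f r then d else 0

theorem Mono.map_red {n : ℕ} {σ : Fin n → Fin n} {c : Rbar}
    {M : Matrix (Fin n) (Fin n) GaussianInt} (hM : Mono σ c M) : M.map red = graphMat σ c := by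
  ext1 r s
  by_cases h : s = σ r
  · simp only [Matrix.map_apply, graphMat, Matrix.of_apply, if_pos h]
    exact (hM r s).1 h
  · simp only [Matrix.map_apply, graphMat, Matrix.of_apply, if_neg h]
    rw [(hM r s).2 h, map_zero]

theorem graphMat_inj {n : ℕ} {f g : Fin n → Fin n} {c d : Rbar} (hc : c ≠ 0)
    (h : graphMat f c = graphMat g d) : f = g := by
  funext r
  by_contra hne
  have h1 := congrFun (congrFun h r) (f r)
  simp only [graphMat, Matrix.of_apply, if_true, if_neg hne] at h1
  exact hc h1

theorem twist_inj {k : ℕ} {σ τ : Fin (2 ^ k) → Fin (2 ^ k)} {a b : Fin 2}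
    (h : twist k σ a = twist k τ b) : σ = τ := by
  funext r
  have h1 := congrFun h (pairEquiv k (r, 0))
  simp only [twist, Equiv.symm_apply_apply, EmbeddingLike.apply_eq_iff_eq] at h1
  exact (Prod.ext_iff.1 h1).1

theorem Mono.tens {k : ℕ} {σ : Fin (2 ^ k) → Fin (2 ^ k)} {b : Fin 2} {c d : Rbar}
    {M : Matrix (Fin (2 ^ k)) (Fin (2 ^ k)) GaussianInt}
    {P : Matrix (Fin 2) (Fin 2) GaussianInt} (hM : Mono σ c M)
    (hP : Mono (fun r : Fin 2 => r + b) d P) :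
    (DiracSpinor.tens k M P).map red = graphMat (twist k σ b) (c * d) :=
  ((hM.kroneckerMap hP).reindex (pairEquiv k)).map_red

theorem Mono.mul_add {a b : Fin 2} {c d : Rbar} {P Q : Matrix (Fin 2) (Fin 2) GaussianInt}
    (hP : Mono (fun r : Fin 2 => r + a) c P) (hQ : Mono (fun r : Fin 2 => r + b) d Q) :
    Mono (fun r : Fin 2 => r + (a + b)) (c * d) (P * Q) := by
  have h := hP.mul hQ
  have e : (fun r : Fin 2 => r + b) ∘ (fun r : Fin 2 => r + a) = fun r => r + (a + b) := by
    funext r; exact add_assoc r a b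
  rwa [e] at h

theorem mono_Bm_pow (n : ℕ) : ∃ (b : Fin 2) (d : Rbar), (d = 1 ∨ d = iota) ∧
    Mono (fun r : Fin 2 => r + b) d (Bm ^ n) := by
  induction n with
  | zero =>
    refine ⟨0, 1, Or.inl rfl, ?_⟩
    have e : (fun r : Fin 2 => r + 0) = id := by funext r; exact add_zero r
    rw [e, pow_zero]
    exact Mono.one
  | succ n ih =>
    obtain ⟨b, d, hd, h⟩ := ih
    rw [pow_succ]
    exact ⟨_, _, mul_mem_units hd (Or.inr rfl), h.mul_add mono_Bm⟩

/-- The four elements of `𝒥_μ` when `ρₖ(e_μ)` is supported on the graph of `σ` with common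
entry `c`, and `B ^ |μ|` on that of `x ↦ x + b` with common entry `d`, modulo 2. -/
theorem rhoBar_quad {k : ℕ} {μ : Finset (Fin (2 * k))} {σ : Fin (2 ^ k) → Fin (2 ^ k)}
    {b : Fin 2} {c d : Rbar} (hM : Mono σ c (rho k μ))
    (hB : Mono (fun r : Fin 2 => r + b) d (Bm ^ μ.card)) (a₀ a₁ : Fin (2 * (k + 1)))
    (h₀ : a₀.val = 0) (h₁ : a₁.val = 1) :
    rhoBar (k + 1) (shiftUp k μ) = graphMat (twist k σ b) (c * d) ∧
    rhoBar (k + 1) (insert a₀ (shiftUp k μ)) =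
      graphMat (twist k σ (0 + b)) (c * (iota * d)) ∧
    rhoBar (k + 1) (insert a₁ (shiftUp k μ)) =
      graphMat (twist k σ (1 + b)) (c * (iota * d)) ∧
    rhoBar (k + 1) (insert a₀ (insert a₁ (shiftUp k μ))) =
      graphMat (twist k σ (0 + (1 + b))) (c * (iota * (iota * d))) := by
  have r1 : ∀ x ∈ shiftUp k μ, a₁ < x := fun x hx => by
    have := two_le_of_mem_shiftUp hx
    rw [Fin.lt_def]; omega
  have r0 : ∀ x ∈ shiftUp k μ, a₀ < x := fun x hx => by
    have := two_le_of_mem_shiftUp hx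
    rw [Fin.lt_def]; omega
  have r01 : ∀ x ∈ insert a₁ (shiftUp k μ), a₀ < x := fun x hx => by
    rcases Finset.mem_insert.1 hx with rfl | hx
    · rw [Fin.lt_def]; omega
    · exact r0 x hx
  simp only [rhoBar]
  rw [rho_insert _ _ _ r01, rho_insert _ _ _ r0, rho_insert _ _ _ r1, rhoVec_zero _ _ h₀,
    rhoVec_one _ _ h₁, rho_shiftUp, tens_mul, tens_mul, tens_mul, one_mul, one_mul]
  exact ⟨hM.tens hB, hM.tens (mono_E1.mul_add hB), hM.tens (mono_E2.mul_add hB),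
    hM.tens (mono_E1.mul_add (mono_E2.mul_add hB))⟩

/-- The four values of a family over `{1, ι} × Fin 2`, listed along the orbit of a starting
point `(e, b)`. -/
theorem exists_iff_orbit {α : Type*} (K : Rbar → Fin 2 → α) (X : α) {e : Rbar}
    (he : e = 1 ∨ e = iota) (b : Fin 2) :
    (∃ (d : Rbar) (b : Fin 2), (d = 1 ∨ d = iota) ∧ X = K d b) ↔
      X = K e b ∨ X = K (iota * e) b ∨ X = K (iota * e) (1 + b) ∨ X = K e (1 + b) := by
  have hb : ∀ x : Fin 2, x = b ∨ x = 1 + b := by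
    revert b; decide
  have hd : ∀ d : Rbar, (d = 1 ∨ d = iota) ↔ (d = e ∨ d = iota * e) := by
    intro d
    rcases he with rfl | rfl
    · rw [mul_one]
    · rw [iota_mul_iota, or_comm]
  constructor
  · rintro ⟨d, x, h, rfl⟩
    rcases (hd d).1 h with rfl | rfl <;> rcases hb x with rfl | h1
    · exact Or.inl rfl
    · exact Or.inr (Or.inr (Or.inr (by rw [h1])))
    · exact Or.inr (Or.inl rfl)
    · exact Or.inr (Or.inr (Or.inl (by rw [h1])))
  · rintro (h | h | h | h)
    exacts [⟨_, _, (hd _).2 (Or.inl rfl), h⟩, ⟨_, _, (hd _).2 (Or.inr rfl), h⟩,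
      ⟨_, _, (hd _).2 (Or.inr rfl), h⟩, ⟨_, _, (hd _).2 (Or.inl rfl), h⟩]

/-- `𝒥_μ` depends only on the map `σ` whose graph supports `ρₖ(e_μ)`. -/
theorem mem_quadSet_iff {k : ℕ} {μ : Finset (Fin (2 * k))} {σ : Fin (2 ^ k) → Fin (2 ^ k)}
    {c : Rbar} (hc : c = 1 ∨ c = iota) (hM : Mono σ c (rho k μ))
    (X : Matrix (Fin (2 ^ (k + 1))) (Fin (2 ^ (k + 1))) Rbar) :
    X ∈ quadSet k μ ↔ ∃ (d : Rbar) (b : Fin 2), (d = 1 ∨ d = iota) ∧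
      X = graphMat (twist k σ b) d := by
  obtain ⟨b, d, hd, hB⟩ := mono_Bm_pow μ.card
  obtain ⟨q1, q2, q3, q4⟩ := rhoBar_quad hM hB ⟨0, by omega⟩ ⟨1, by omega⟩ rfl rfl
  have e1 : c * (iota * d) = iota * (c * d) := mul_left_comm _ _ _
  have e2 : c * (iota * (iota * d)) = c * d := by
    rw [← mul_assoc iota, iota_mul_iota, one_mul]
  rw [quadSet, q1, q2, q3, q4, e1, e2, zero_add, zero_add]
  exact (exists_iff_orbit (fun d b => graphMat (twist k σ b) d) X (mul_mem_units hc hd) b).symm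

/-- `𝒥_μ = 𝒥_η` iff `Sh(ρₖ(e_μ)) = Sh(ρₖ(e_η))`; moreover `𝒥_μ` and `𝒥_η` are disjoint
when the shapes differ. -/
theorem quadSet_eq_iff_shape (k : ℕ) (hk : 1 ≤ k) (μ η : Finset (Fin (2 * k))) :
    (quadSet k μ = quadSet k η ↔ Sh (rho k μ) = Sh (rho k η)) ∧
    (Sh (rho k μ) ≠ Sh (rho k η) → quadSet k μ ∩ quadSet k η = ∅) := by
  obtain ⟨σ, c, hc, hM⟩ := good_rho k μ
  obtain ⟨τ, d, hd, hN⟩ := good_rho k η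
  have nz : ∀ {x : Rbar}, (x = 1 ∨ x = iota) → x ≠ 0 := by
    rintro x (rfl | rfl)
    exacts [one_ne_zero_Rbar, iota_ne_zero]
  rw [Ne, Sh_eq_iff (nz hc) (nz hd) hM hN]
  -- One common element already forces the supports to coincide.
  have common : ∀ X, X ∈ quadSet k μ → X ∈ quadSet k η → σ = τ := by
    intro X hX hY
    obtain ⟨x, a, hx, rfl⟩ := (mem_quadSet_iff hc hM X).1 hX
    obtain ⟨y, b, hy, h⟩ := (mem_quadSet_iff hd hN _).1 hY
    exact twist_inj (graphMat_inj (nz hx) h)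
  refine ⟨⟨fun h => ?_, fun h => ?_⟩, fun h => ?_⟩
  · have h0 : rhoBar (k + 1) (shiftUp k μ) ∈ quadSet k μ := Or.inl rfl
    exact common _ h0 (h ▸ h0)
  · subst h
    ext1 X
    rw [mem_quadSet_iff hc hM, mem_quadSet_iff hd hN]
  · exact Set.eq_empty_of_forall_notMem fun X hX => h (common X hX.1 hX.2)

end DiracSpinor
end

section
/- Let k ≥ 1 and μ ⊆ {1, …, 2k}, and suppose the entrywise reduction M = ρₖ(e_μ) mod 2ℤ[i] is not the identity matrix over ℤ[i]/2ℤ[i]. Then the number of vectors v ∈ (ℤ[i]/2ℤ[i])^{2^k} with M·v = v is exactly 2^{2^k}; that is, the Clifford multiplication action of any non-identity generator on the 2-torsion points of the Dirac spinor torus of dimension 2^k has exactly 2^{2^k} fixed points. -/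
/-!
Modulo `2` the signs disappear: `E₁` becomes the scalar `i`, while `E₂` and `B` both become `i`
times the swap of the two basis vectors. Hence every `ρₖ(e_μ)` reduces to `u • P`, where `u` is `1`
or `i` and `P` is the permutation matrix of a translation `s ↦ s ^^^ m` of
`{0, …, 2^k − 1} ≃ (ℤ/2)^k`. This shape is preserved by Kronecker products (`isTrans_kron`) and by
matrix products (`isTrans_mul`, using `i² = −1 = 1`), which gives `isTrans_rho`.

If `m ≠ 0`, the translation is a fixed-point-free involution and `u² = 1`, so a fixed vector is
determined by arbitrary values on one index from each of the `2^k / 2` orbits; as `ℤ[i]/2ℤ[i]` has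
four elements, there are `4 ^ (2^k / 2)` fixed vectors (`card_fixed_translation`). If `m = 0`, the
matrix is the scalar `u`, and `u = i` because the identity is excluded; multiplication by `i` fixes
two of the four elements, so there are two choices for each coordinate (`card_fixed_scalar`).
-/

open Matrix

namespace DiracSpinor

/-! ### Generators modulo 2 as scaled xor translations -/

/-- `IsTrans n M` says that, modulo `2`, the matrix `M` is `u` times the permutation matrix of the
translation `s ↦ s ^^^ m` of the index set, where `u` is `1` or `i` and `m < n`. Indices are
compared as natural numbers, so the notion ignores the `finCongr` reindexings between `Fin` types
of equal size; it is only meaningful when `n` is a power of two. -/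
def IsTrans (n : ℕ) (M : Matrix (Fin n) (Fin n) GaussianInt) : Prop :=
  ∃ (u : Rbar) (m : ℕ), (u = 1 ∨ u = red gi) ∧ m < n ∧
    ∀ r s : Fin n, red (M r s) = if r.val = s.val ^^^ m then u else 0

theorem red_two : red 2 = 0 :=
  Ideal.Quotient.eq_zero_iff_mem.2 (Ideal.mem_span_singleton_self 2)

theorem red_gi_mul_self : red gi * red gi = 1 := by
  have h : gi * gi = -1 := by decide
  rw [← map_mul, h, red_neg, map_one]

theorem scalar_mul {u v : Rbar} (hu : u = 1 ∨ u = red gi) (hv : v = 1 ∨ v = red gi) :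
    u * v = 1 ∨ u * v = red gi := by
  rcases hu with rfl | rfl <;> rcases hv with rfl | rfl <;> simp [red_gi_mul_self]

theorem isTrans_one {n : ℕ} (hn : 0 < n) : IsTrans n 1 := by
  refine ⟨1, 0, Or.inl rfl, hn, fun r s => ?_⟩
  by_cases h : r = s
  · subst h
    simp
  · simp [h, Fin.val_ne_of_ne h]

theorem isTrans_reindex {m n : ℕ} (e : m = n) {M : Matrix (Fin m) (Fin m) GaussianInt}
    (h : IsTrans m M) : IsTrans n (Matrix.reindex (finCongr e) (finCongr e) M) := by
  subst e
  simpa using h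

theorem isTrans_mul {k : ℕ} {M N : Matrix (Fin (2 ^ k)) (Fin (2 ^ k)) GaussianInt}
    (hM : IsTrans _ M) (hN : IsTrans _ N) : IsTrans _ (M * N) := by
  obtain ⟨u, a, hu, ha, hM⟩ := hM
  obtain ⟨v, b, hv, hb, hN⟩ := hN
  refine ⟨u * v, b ^^^ a, scalar_mul hu hv, Nat.xor_lt_two_pow hb ha, fun r s => ?_⟩
  rw [Matrix.mul_apply, map_sum, Finset.sum_eq_single (⟨s.val ^^^ b, Nat.xor_lt_two_pow s.2 hb⟩)]
  · rw [map_mul, hM, hN]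
    simp [Nat.xor_assoc]
  · intro j _ hj
    rw [map_mul, hN, if_neg, mul_zero]
    exact fun h => hj (Fin.ext h)
  · simp

theorem xor_block {t x y a b : ℕ} (hy : y < 2 ^ t) (hb : b < 2 ^ t) :
    (y + 2 ^ t * x) ^^^ (b + 2 ^ t * a) = (y ^^^ b) + 2 ^ t * (x ^^^ a) := by
  have hp : 0 < 2 ^ t := by positivity
  rw [← Nat.mod_add_div ((y + 2 ^ t * x) ^^^ (b + 2 ^ t * a)) (2 ^ t), Nat.xor_mod_two_pow,
    Nat.xor_div_two_pow]
  simp [Nat.add_mul_div_left, hp, Nat.mod_eq_of_lt, Nat.div_eq_of_lt, hy, hb]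

theorem isTrans_kron {l n t : ℕ} (hn : n = 2 ^ t) {A : Matrix (Fin l) (Fin l) GaussianInt}
    {B : Matrix (Fin n) (Fin n) GaussianInt} (hA : IsTrans l A) (hB : IsTrans n B) :
    IsTrans (l * n) (kron A B) := by
  subst hn
  obtain ⟨u, a, hu, ha, hA⟩ := hA
  obtain ⟨v, b, hv, hb, hB⟩ := hB
  refine ⟨u * v, b + 2 ^ t * a, scalar_mul hu hv, ?_, fun r s => ?_⟩
  · calc b + 2 ^ t * a < 2 ^ t * (a + 1) := by rw [mul_add]; omega
      _ ≤ 2 ^ t * l := Nat.mul_le_mul_left _ ha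
      _ = l * 2 ^ t := mul_comm _ _
  · obtain ⟨⟨r₁, r₂⟩, rfl⟩ := finProdFinEquiv.surjective r
    obtain ⟨⟨s₁, s₂⟩, rfl⟩ := finProdFinEquiv.surjective s
    have hp : 0 < 2 ^ t := by positivity
    have key : (r₂.val + 2 ^ t * r₁.val = (s₂.val + 2 ^ t * s₁.val) ^^^ (b + 2 ^ t * a)) ↔
        (r₁.val = s₁.val ^^^ a ∧ r₂.val = s₂.val ^^^ b) := by
      have hx : s₂.val ^^^ b < 2 ^ t := Nat.xor_lt_two_pow s₂.2 hb
      rw [xor_block s₂.2 hb]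
      refine ⟨fun h => ?_, fun h => by rw [h.1, h.2]⟩
      have hd := congrArg (· / 2 ^ t) h
      have hm := congrArg (· % 2 ^ t) h
      simp [Nat.add_mul_div_left, hp, Nat.mod_eq_of_lt, Nat.div_eq_of_lt, hx] at hd hm
      exact ⟨hd, hm⟩
    simp only [kron, Matrix.reindex_apply, Matrix.submatrix_apply, Equiv.symm_apply_apply,
      Matrix.kroneckerMap_apply, map_mul, hA, hB, finProdFinEquiv_apply_val, key]
    by_cases h₁ : r₁.val = s₁.val ^^^ a <;> by_cases h₂ : r₂.val = s₂.val ^^^ b <;> simp [h₁, h₂]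

theorem isTrans_kronPow {A : Matrix (Fin 2) (Fin 2) GaussianInt} (hA : IsTrans 2 A) (t : ℕ) :
    IsTrans (2 ^ t) (kronPow A t) := by
  induction t with
  | zero => exact isTrans_one one_pos
  | succ t ih => exact isTrans_reindex _ (isTrans_kron (t := 1) rfl ih hA)

/-- Modulo `2` the signs disappear, so `E₁` becomes the scalar `i`. -/
theorem isTrans_E1 : IsTrans 2 E1 := by
  refine ⟨red gi, 0, Or.inr rfl, by norm_num, fun r s => ?_⟩
  fin_cases r <;> fin_cases s <;> simp [E1, red_neg]

theorem isTrans_E2 : IsTrans 2 E2 := by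
  refine ⟨red gi, 1, Or.inr rfl, by norm_num, fun r s => ?_⟩
  fin_cases r <;> fin_cases s <;> simp [E2]

/-- Modulo `2` the matrix `B` coincides with `E₂`. -/
theorem isTrans_Bm : IsTrans 2 Bm := by
  refine ⟨red gi, 1, Or.inr rfl, by norm_num, fun r s => ?_⟩
  fin_cases r <;> fin_cases s <;> simp [Bm, red_neg]

theorem isTrans_rhoVec (k : ℕ) (i : Fin (2 * k)) : IsTrans (2 ^ k) (rhoVec k i) := by
  refine isTrans_reindex _ (isTrans_kron rfl (isTrans_kron (t := 1) rfl
    (isTrans_kronPow (isTrans_one two_pos) _) ?_) (isTrans_kronPow isTrans_Bm _))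
  split_ifs
  exacts [isTrans_E1, isTrans_E2]

theorem isTrans_rho (k : ℕ) (μ : Finset (Fin (2 * k))) : IsTrans (2 ^ k) (rho k μ) := by
  unfold rho
  induction μ.sort (· ≤ ·) with
  | nil => exact isTrans_one (by positivity)
  | cons i l ih => simpa using isTrans_mul (isTrans_rhoVec k i) ih

/-! ### The ring `ℤ[i]/2ℤ[i]` -/

/-- The representatives `a + b i` with `a, b ∈ {0, 1}` of the classes modulo `2`. -/
def rep (p : Fin 2 × Fin 2) : Rbar := red ⟨(p.1.val : ℤ), (p.2.val : ℤ)⟩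

theorem red_eq_iff (x y : GaussianInt) :
    red x = red y ↔ (2 : ℤ) ∣ x.re - y.re ∧ (2 : ℤ) ∣ x.im - y.im := by
  have h : ((2 : ℤ) : GaussianInt) = 2 := by norm_num
  unfold red
  rw [Ideal.Quotient.eq, Ideal.mem_span_singleton, ← h, Zsqrtd.intCast_dvd]
  simp

theorem rep_bijective : Function.Bijective rep := by
  constructor
  · rintro ⟨a, b⟩ ⟨c, d⟩ h
    obtain ⟨h₁, h₂⟩ := (red_eq_iff _ _).1 h
    simp only at h₁ h₂
    ext <;> simp only <;> omega
  · intro x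
    obtain ⟨z, rfl⟩ := Ideal.Quotient.mk_surjective x
    refine ⟨(⟨(z.re % 2).toNat, by omega⟩, ⟨(z.im % 2).toNat, by omega⟩), ?_⟩
    refine (red_eq_iff _ _).2 ⟨?_, ?_⟩ <;> simp only <;> omega

theorem card_Rbar : Nat.card Rbar = 4 := by
  rw [← Nat.card_congr (Equiv.ofBijective rep rep_bijective)]
  simp

/-- Multiplication by `i` exchanges the coordinates of `a + b i` modulo `2`, so it fixes exactly
the two classes `0` and `1 + i`. -/
theorem card_fixed_gi : Nat.card {x : Rbar // red gi * x = x} = 2 := by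
  have e : {p : Fin 2 × Fin 2 // p.1 = p.2} ≃ {x : Rbar // red gi * x = x} :=
    (Equiv.ofBijective rep rep_bijective).subtypeEquiv fun p => by
      change _ ↔ red gi * red _ = red _
      rw [← map_mul, red_eq_iff]
      simp only [gi, Zsqrtd.re_mul, Zsqrtd.im_mul, Fin.ext_iff]
      omega
  rw [← Nat.card_congr e, Nat.card_eq_fintype_card]
  decide

/-! ### Counting fixed vectors -/

section Count

variable {ι R : Type*} [Fintype ι] [LinearOrder ι] [CommRing R]

/-- A vector fixed by `u` times the permutation matrix of a fixed-point-free involution `τ` is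
determined freely by its entries on the transversal `{r | r < τ r}` of the orbits of `τ`. -/
def fixedEquiv (τ : ι → ι) (hτ : Function.Involutive τ) (hne : ∀ r, τ r ≠ r) (u : R)
    (hu : u * u = 1) :
    {v : ι → R // ∀ r, u * v (τ r) = v r} ≃ ({r // r < τ r} → R) where
  toFun v r := v.1 r.1
  invFun w := ⟨fun r => if h : r < τ r then w ⟨r, h⟩ else
      u * w ⟨τ r, by rw [hτ r]; exact lt_of_le_of_ne (not_lt.1 h) (hne r)⟩, fun r => by
    rcases lt_or_gt_of_ne (hne r) with h | h
    · simp [hτ r, h, h.not_gt]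
    · simp [hτ r, h, h.not_gt, ← mul_assoc, hu]⟩
  left_inv v := by
    ext r
    by_cases h : r < τ r
    · simp [h]
    · simp [h, v.2 r]
  right_inv w := by
    ext r
    simp [r.2]

theorem two_mul_card_lt (τ : ι → ι) (hτ : Function.Involutive τ) (hne : ∀ r, τ r ≠ r) :
    2 * Fintype.card {r // r < τ r} = Fintype.card ι := by
  have e : {r // r < τ r} ≃ {r // ¬ r < τ r} :=
    (Equiv.subtypeEquiv hτ.toPerm fun r => by
      simp only [Function.Involutive.coe_toPerm, hτ r, not_lt]
      exact ⟨le_of_lt, fun h => lt_of_le_of_ne h (hne r).symm⟩)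
  have h := Fintype.card_congr e
  rw [Fintype.card_subtype_compl] at h
  have := Fintype.card_subtype_le (fun r => r < τ r)
  omega

end Count

theorem card_fixed_translation (n : ℕ) (τ : Fin n → Fin n) (hτ : Function.Involutive τ)
    (hne : ∀ r, τ r ≠ r) (u : Rbar) (hu : u * u = 1) :
    Nat.card {v : Fin n → Rbar // ∀ r, u * v (τ r) = v r} = 2 ^ n := by
  have h := two_mul_card_lt τ hτ hne
  rw [Fintype.card_fin] at h
  rw [Nat.card_congr (fixedEquiv τ hτ hne u hu), Nat.card_fun, card_Rbar, Nat.card_eq_fintype_card]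
  conv_rhs => rw [← h, pow_mul]
  norm_num

theorem card_fixed_scalar (n : ℕ) :
    Nat.card {v : Fin n → Rbar // ∀ r, red gi * v r = v r} = 2 ^ n := by
  rw [Nat.card_congr (Equiv.subtypePiEquivPi (p := fun _ x => red gi * x = x)), Nat.card_pi]
  simp [card_fixed_gi]

/-- The Clifford multiplication action of any non-identity generator on the 2-torsion points
of the Dirac spinor torus of dimension `2^k` has exactly `2^{2^k}` fixed points. -/
theorem card_fixed_points (k : ℕ) (hk : 1 ≤ k) (μ : Finset (Fin (2 * k)))
    (h : rhoBar k μ ≠ 1) :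
    Set.ncard {v : Fin (2 ^ k) → Rbar | (rhoBar k μ).mulVec v = v} = 2 ^ (2 ^ k) := by
  obtain ⟨u, m, hu, hm, hM⟩ := isTrans_rho k μ
  have hu2 : u * u = 1 := by
    rcases hu with rfl | rfl
    exacts [one_mul 1, red_gi_mul_self]
  have hx (r : Fin (2 ^ k)) : r.val ^^^ m < 2 ^ k := Nat.xor_lt_two_pow r.2 hm
  have hmul (v : Fin (2 ^ k) → Rbar) (r : Fin (2 ^ k)) :
      (rhoBar k μ).mulVec v r = u * v ⟨r.val ^^^ m, hx r⟩ := by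
    rw [Matrix.mulVec, dotProduct, Finset.sum_eq_single (⟨r.val ^^^ m, hx r⟩)]
    · simp [rhoBar, hM]
    · intro j _ hj
      simp only [rhoBar, Matrix.map_apply, hM]
      rw [if_neg, zero_mul]
      intro h
      exact hj (Fin.ext (by simp [h]))
    · simp
  simp only [← Nat.card_coe_set_eq, Set.coe_ofPred, funext_iff, hmul]
  by_cases h0 : m = 0
  · subst h0
    rcases hu with rfl | rfl
    · -- Here the reduction would be the identity matrix, which is excluded.
      refine absurd ?_ h
      ext r s
      simp [rhoBar, hM, Matrix.one_apply, Fin.ext_iff]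
    · simpa using card_fixed_scalar (2 ^ k)
  · refine card_fixed_translation (2 ^ k) (fun r => ⟨r.val ^^^ m, hx r⟩) (fun r => ?_)
      (fun r hr => h0 ?_) u hu2
    · simp
    · simpa using congrArg (fun t : Fin (2 ^ k) => r.val ^^^ t.val) hr

end DiracSpinor
end
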